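/- arXiv:2207.06980 — 5 statements merged into one kernel-verified Lean document; each statement's English description precedes it below -/
import Mathlib

section
/- Let α, β₁, β₂ be intuitionistic fuzzy values with α ⊂ β₁ ⊂ β₂ in Atanassov's order. Then Z(α, β₁) ≤ Z(α, β₂), and consequently JS(α, β₁) ≤ JS(α, β₂). -/
/-- `L p q = p·log₂(2p/(p+q)) + q·log₂(2q/(p+q))`, with Lean's conventions
`0 * log₂ _ = 0` and `x / 0 = 0`, `log₂ 0 = 0` implementing `0·log 0 = 0`
and `0·log(0/0) = 0`. -/
noncomputable def L (p q : ℝ) : ℝ :=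
  p * Real.logb 2 (2 * p / (p + q)) + q * Real.logb 2 (2 * q / (p + q))

/-- An intuitionistic fuzzy value: a pair `⟨μ, ν⟩` with `0 ≤ μ`, `0 ≤ ν`,
`μ + ν ≤ 1` (hence also `μ ≤ 1` and `ν ≤ 1`). -/
@[ext]
structure IFV where
  mu : ℝ
  nu : ℝ
  mu_nonneg : 0 ≤ mu
  nu_nonneg : 0 ≤ nu
  sum_le : mu + nu ≤ 1

/-- `Z(α,β) = L(1−μ_α, 1−μ_β) + L(ν_α, ν_β)`. -/
noncomputable def Z (a b : IFV) : ℝ := L (1 - a.mu) (1 - b.mu) + L a.nu b.nu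

/-- The normalized Jensen–Shannon IF divergence `JS(α,β) = √(Z(α,β)/2)`. -/
noncomputable def JS (a b : IFV) : ℝ := Real.sqrt (Z a b / 2)

/-- Atanassov's order: `α ⊂ β` iff `μ_α ≤ μ_β` and `ν_α ≥ ν_β`. -/
def IFV.sub (a b : IFV) : Prop := a.mu ≤ b.mu ∧ b.nu ≤ a.nu

/-- Strict Atanassov order: `α ⊊ β` iff `α ⊂ β` and `α ≠ β`. -/
def IFV.ssub (a b : IFV) : Prop := a.sub b ∧ a ≠ b

/-- The IFV `⟨1, 0⟩`. -/
def IFV.posOne : IFV := ⟨1, 0, by norm_num, le_rfl, by norm_num⟩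

/-- The IFV `⟨0, 1⟩`. -/
def IFV.negOne : IFV := ⟨0, 1, le_rfl, by norm_num, by norm_num⟩

/-!
With `φ x = x log x`, `L p q` is the Jensen gap `φ p + φ q - 2 φ ((p + q) / 2)` divided by `log 2`.
Hence `L p` is continuous up to `q = 0`, and its derivative `log₂ (2q / (p + q))` is nonpositive
for `0 < q ≤ p`: moving `q` away from `p` towards `0` increases `L p q`. Along a chain
`α ⊂ β₁ ⊂ β₂` both coordinates `1 - μ` and `ν` decrease, so both summands of `Z` increase.
-/

lemma log_two_mul_div_add {x y : ℝ} (hx : x ≠ 0) (hxy : x + y ≠ 0) :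
    Real.log (2 * x / (x + y)) = Real.log x - Real.log ((x + y) / 2) := by
  rw [← Real.log_div hx (div_ne_zero hxy two_ne_zero)]
  field_simp

lemma L_eq_mul_log {p q : ℝ} (hp : 0 ≤ p) (hq : 0 ≤ q) :
    L p q = (p * Real.log p + q * Real.log q
      - 2 * ((p + q) / 2 * Real.log ((p + q) / 2))) / Real.log 2 := by
  have mul_log_ratio {x y : ℝ} (hx : 0 ≤ x) (hy : 0 ≤ y) :
      x * Real.log (2 * x / (x + y)) = x * Real.log x - x * Real.log ((x + y) / 2) := by
    rcases hx.eq_or_lt with rfl | hx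
    · simp
    · rw [log_two_mul_div_add hx.ne' (by positivity), mul_sub]
  have hpq := mul_log_ratio hp hq
  have hqp := mul_log_ratio hq hp
  rw [add_comm q p] at hqp
  simp only [L, Real.logb, ← mul_div_assoc, ← add_div]
  congr 1
  linear_combination hpq + hqp

lemma continuousOn_L {p : ℝ} (hp : 0 ≤ p) : ContinuousOn (L p) (Set.Ici 0) := by
  refine ContinuousOn.congr (Continuous.continuousOn ?_) fun q hq ↦ L_eq_mul_log hp hq
  have hmid : Continuous fun q : ℝ ↦ (p + q) / 2 * Real.log ((p + q) / 2) :=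
    Real.continuous_mul_log.comp (by fun_prop : Continuous fun q : ℝ ↦ (p + q) / 2)
  exact ((continuous_const.add Real.continuous_mul_log).sub (hmid.const_mul 2)).div_const _

lemma hasDerivAt_L {p q : ℝ} (hp : 0 ≤ p) (hq : 0 < q) :
    HasDerivAt (L p) (Real.logb 2 (2 * q / (p + q))) q := by
  have hpq : (p + q) / 2 ≠ 0 := by positivity
  have hmid : HasDerivAt (fun x ↦ (p + x) / 2 * Real.log ((p + x) / 2))
      ((Real.log ((p + q) / 2) + 1) * (1 / 2)) q :=
    (Real.hasDerivAt_mul_log hpq).comp (h := fun x ↦ (p + x) / 2) q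
      (((hasDerivAt_id q).const_add p).div_const 2)
  have hclosed :=
    (((Real.hasDerivAt_mul_log hq.ne').const_add (p * Real.log p)).sub
      (hmid.const_mul 2)).div_const (Real.log 2)
  refine (hclosed.congr_of_eventuallyEq ?_).congr_deriv ?_
  · filter_upwards [lt_mem_nhds hq] with x hx using L_eq_mul_log hp hx.le
  · rw [Real.logb, add_comm p q, log_two_mul_div_add hq.ne' (by positivity)]
    ring

lemma antitoneOn_L (p : ℝ) : AntitoneOn (L p) (Set.Icc 0 p) := by
  rcases lt_or_ge p 0 with hp | hp
  · exact fun _ hq ↦ absurd (hq.1.trans hq.2) hp.not_ge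
  have mem_Ioo {q : ℝ} (hq : q ∈ interior (Set.Icc 0 p)) : 0 < q ∧ q < p := by
    rwa [interior_Icc] at hq
  refine antitoneOn_of_hasDerivWithinAt_nonpos (convex_Icc 0 p)
    ((continuousOn_L hp).mono Set.Icc_subset_Ici_self)
    (fun q hq ↦ (hasDerivAt_L hp (mem_Ioo hq).1).hasDerivWithinAt) fun q hq ↦ ?_
  obtain ⟨hq, hqp⟩ := mem_Ioo hq
  have hratio : 2 * q / (p + q) ≤ 1 := (div_le_one₀ (by positivity)).2 (by linarith)
  exact Real.logb_nonpos one_lt_two (by positivity) hratio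

lemma IFV.mu_le_one (a : IFV) : a.mu ≤ 1 := by
  linarith [a.nu_nonneg, a.sum_le]

lemma Z_le_Z_of_sub_chain {a b₁ b₂ : IFV} (h₁ : a.sub b₁) (h₂ : b₁.sub b₂) :
    Z a b₁ ≤ Z a b₂ := by
  obtain ⟨hμ₁, hν₁⟩ := h₁
  obtain ⟨hμ₂, hν₂⟩ := h₂
  have hμ : L (1 - a.mu) (1 - b₁.mu) ≤ L (1 - a.mu) (1 - b₂.mu) :=
    antitoneOn_L _ ⟨sub_nonneg.2 b₂.mu_le_one, by linarith⟩
      ⟨sub_nonneg.2 b₁.mu_le_one, by linarith⟩ (by linarith)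
  have hν : L a.nu b₁.nu ≤ L a.nu b₂.nu :=
    antitoneOn_L _ ⟨b₂.nu_nonneg, hν₂.trans hν₁⟩ ⟨b₁.nu_nonneg, hν₁⟩ hν₂
  exact add_le_add hμ hν

theorem Z_JS_mono_of_sub_chain (a b1 b2 : IFV)
    (h1 : a.sub b1) (h2 : b1.sub b2) :
    Z a b1 ≤ Z a b2 ∧ JS a b1 ≤ JS a b2 := by
  have hZ : Z a b1 ≤ Z a b2 := Z_le_Z_of_sub_chain h1 h2
  exact ⟨hZ, Real.sqrt_le_sqrt (by gcongr)⟩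
end

section
/- For intuitionistic fuzzy values α and β, JS(α, β) = 1 if and only if (α = ⟨0,1⟩ and β = ⟨1,0⟩) or (α = ⟨1,0⟩ and β = ⟨0,1⟩). -/
/-! Write `L p q = (p + q) * (1 - H (p / (p + q)))`, where `H` is the binary entropy in bits. Since
`H` is concave on `[0, 1]` with `H 0 = H 1 = 0` and `H 2⁻¹ = 1`, it lies above the tent function
`t ↦ 2 * min t (1 - t)`, and therefore `L p q ≤ |p - q|`. Hence `Z` is at most the `ℓ¹` distance
`|μ_α - μ_β| + |ν_α - ν_β|`, while `JS = 1` means `Z = 2`; on the triangle of intuitionistic fuzzy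
values this distance reaches `2` only between the vertices `⟨0, 1⟩` and `⟨1, 0⟩`. -/

theorem two_mul_min_mul_log_two_le_binEntropy {t : ℝ} (ht₀ : 0 ≤ t) (ht₁ : t ≤ 1) :
    2 * min t (1 - t) * Real.log 2 ≤ Real.binEntropy t := by
  wlog h : t ≤ 1 - t generalizing t
  · rw [min_comm, ← Real.binEntropy_one_sub]
    simpa only [sub_sub_cancel] using
      this (sub_nonneg.2 ht₁) (sub_le_self 1 ht₀) (by linarith)
  have concave := Real.strictConcave_binEntropy.concaveOn.2
    (show (2⁻¹ : ℝ) ∈ Set.Icc 0 1 by norm_num) (show (0 : ℝ) ∈ Set.Icc 0 1 by norm_num)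
    (show 0 ≤ 2 * t by linarith) (show 0 ≤ 1 - 2 * t by linarith) (add_sub_cancel _ _)
  have midpoint : 2 * t * 2⁻¹ = t := by ring
  simpa only [smul_eq_mul, mul_zero, add_zero, midpoint, Real.binEntropy_two_inv,
    Real.binEntropy_zero, min_eq_left h] using concave

theorem mul_logb_two_mul (t : ℝ) :
    t * Real.logb 2 (2 * t) = t - Real.negMulLog t / Real.log 2 := by
  rcases eq_or_ne t 0 with rfl | ht
  · simp
  · rw [Real.logb_mul two_ne_zero ht, Real.logb_self_eq_one one_lt_two, Real.logb, Real.negMulLog]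
    ring

theorem L_eq_add_mul_one_sub_binEntropy (p q : ℝ) :
    L p q = (p + q) * (1 - Real.binEntropy (p / (p + q)) / Real.log 2) := by
  rcases eq_or_ne (p + q) 0 with hs | hs
  · simp [L, hs]
  · have compl : q / (p + q) = 1 - p / (p + q) := by rw [eq_sub_iff_add_eq', ← add_div, div_self hs]
    calc L p q
        = (p + q) * (p / (p + q) * Real.logb 2 (2 * (p / (p + q))) +
            q / (p + q) * Real.logb 2 (2 * (q / (p + q)))) := by
          rw [L, mul_div_assoc, mul_div_assoc]
          field_simp
      _ = (p + q) * (1 - Real.binEntropy (p / (p + q)) / Real.log 2) := by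
          rw [mul_logb_two_mul, mul_logb_two_mul, compl,
            Real.binEntropy_eq_negMulLog_add_negMulLog_one_sub]
          ring

theorem L_comm (p q : ℝ) : L p q = L q p := by
  rw [L, L, add_comm p q, add_comm]

theorem L_zero_right (p : ℝ) : L p 0 = p := by
  rcases eq_or_ne p 0 with rfl | hp
  · simp [L]
  · simp [L_eq_add_mul_one_sub_binEntropy, hp]

theorem L_le_abs_sub {p q : ℝ} (hp : 0 ≤ p) (hq : 0 ≤ q) : L p q ≤ |p - q| := by
  rcases (add_nonneg hp hq).eq_or_lt with hs | hs
  · simp [L, ← hs]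
  have compl : 1 - p / (p + q) = q / (p + q) := by rw [one_sub_div hs.ne', add_sub_cancel_left]
  have entropy_ge : 2 * min (p / (p + q)) (q / (p + q)) ≤
      Real.binEntropy (p / (p + q)) / Real.log 2 := by
    rw [le_div_iff₀ (Real.log_pos one_lt_two), ← compl]
    exact two_mul_min_mul_log_two_le_binEntropy (div_nonneg hp hs.le)
      (div_le_one_of_le₀ (le_add_of_nonneg_right hq) hs.le)
  calc L p q
      = (p + q) * (1 - Real.binEntropy (p / (p + q)) / Real.log 2) :=
        L_eq_add_mul_one_sub_binEntropy p q
    _ ≤ (p + q) * (1 - 2 * min (p / (p + q)) (q / (p + q))) := by gcongr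
    _ = p + q - 2 * min p q := by
        rw [min_div_div_right hs.le]
        field_simp
    _ = |p - q| := by
        rw [abs_sub_comm, ← max_sub_min_eq_abs, ← max_add_min p q]
        ring

theorem Z_le_abs_sub_add_abs_sub (a b : IFV) : Z a b ≤ |a.mu - b.mu| + |a.nu - b.nu| := by
  have mu_le_one (c : IFV) : c.mu ≤ 1 := by linarith [c.nu_nonneg, c.sum_le]
  calc Z a b
      ≤ |1 - a.mu - (1 - b.mu)| + |a.nu - b.nu| :=
        add_le_add (L_le_abs_sub (sub_nonneg.2 (mu_le_one a)) (sub_nonneg.2 (mu_le_one b)))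
          (L_le_abs_sub a.nu_nonneg b.nu_nonneg)
    _ = |a.mu - b.mu| + |a.nu - b.nu| := by rw [sub_sub_sub_cancel_left, abs_sub_comm]

theorem IFV.eq_negOne_and_posOne_or_of_two_le_abs_sub_add_abs_sub {a b : IFV}
    (h : 2 ≤ |a.mu - b.mu| + |a.nu - b.nu|) :
    (a = IFV.negOne ∧ b = IFV.posOne) ∨ (a = IFV.posOne ∧ b = IFV.negOne) := by
  obtain ⟨μ, ν, hμ, hν, hsum⟩ := a
  obtain ⟨μ', ν', hμ', hν', hsum'⟩ := b
  simp only [IFV.negOne, IFV.posOne, IFV.mk.injEq] at h ⊢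
  -- Differences of the same sign give at most `1`, because `μ + ν ≤ 1` for both values.
  rcases abs_cases (μ - μ') with ⟨absμ, _⟩ | ⟨absμ, _⟩ <;>
    rcases abs_cases (ν - ν') with ⟨absν, _⟩ | ⟨absν, _⟩ <;> rw [absμ, absν] at h
  · exfalso; linarith
  · right; refine ⟨⟨?_, ?_⟩, ?_, ?_⟩ <;> linarith
  · left; refine ⟨⟨?_, ?_⟩, ?_, ?_⟩ <;> linarith
  · exfalso; linarith

theorem Z_comm (a b : IFV) : Z a b = Z b a := by
  rw [Z, Z, L_comm (1 - a.mu), L_comm a.nu]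

theorem Z_posOne_negOne : Z IFV.posOne IFV.negOne = 2 := by
  norm_num [Z, IFV.posOne, IFV.negOne, L_comm 0 1, L_zero_right]

theorem JS_eq_one_iff_Z_eq_two (a b : IFV) : JS a b = 1 ↔ Z a b = 2 := by
  rw [JS, Real.sqrt_eq_one, div_eq_one_iff_eq two_ne_zero]

theorem JS_eq_one_iff (a b : IFV) :
    JS a b = 1 ↔
      (a = IFV.negOne ∧ b = IFV.posOne) ∨ (a = IFV.posOne ∧ b = IFV.negOne) := by
  rw [JS_eq_one_iff_Z_eq_two]
  constructor
  · intro h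
    exact IFV.eq_negOne_and_posOne_or_of_two_le_abs_sub_add_abs_sub
      (h ▸ Z_le_abs_sub_add_abs_sub a b)
  · rintro (⟨rfl, rfl⟩ | ⟨rfl, rfl⟩)
    · rw [Z_comm, Z_posOne_negOne]
    · exact Z_posOne_negOne
end

section
/- For all intuitionistic fuzzy values α, β, γ, the triangle inequality holds: JS(α, γ) ≤ JS(α, β) + JS(β, γ). -/
/-!
`√L` is a Hilbert-space distance: with `φ p t = (1 - e^{-pt}) / t`,
`∫ t in (0, ∞), (φ p t - φ q t)² = 2 log 2 · L p q`. Writing the integrand as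
`(e^{-pt} - e^{-qt})² / t²` and integrating by parts leaves the two Frullani integrals
`2p ∫ (e^{-(p+q)t} - e^{-2pt}) / t = 2p log (2p / (p+q))` and its mirror image. A sum of `L`-terms
is then a squared distance in an `ℓ²`-product of copies of `L²(0, ∞)`, up to the factor `2 log 2`.
-/

open Filter MeasureTheory Real Set Topology
open scoped NNReal

lemma one_sub_exp_neg_nonneg {x : ℝ} (hx : 0 ≤ x) : 0 ≤ 1 - exp (-x) :=
  sub_nonneg.2 (exp_le_one_iff.2 (neg_nonpos.2 hx))

lemma integrableOn_inv_mul_exp_sub_exp {a b : ℝ} (ha : 0 < a) (hb : 0 < b) :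
    IntegrableOn (fun t ↦ t⁻¹ * (exp (-(a * t)) - exp (-(b * t)))) (Ioi 0) := by
  wlog hab : a ≤ b generalizing a b
  · convert! (this hb ha (le_of_not_ge hab)).neg using 2
    simp only [Pi.neg_apply]
    ring
  have hdom : IntegrableOn (fun t ↦ (b - a) * exp (-a * t)) (Ioi 0) :=
    (integrableOn_exp_mul_Ioi (neg_neg_of_pos ha) 0).const_mul (b - a)
  refine hdom.mono' (by fun_prop) ((ae_restrict_mem measurableSet_Ioi).mono fun t ht ↦ ?_)
  have ht : 0 < t := ht
  have hfactor : exp (-(a * t)) - exp (-(b * t)) =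
      exp (-(a * t)) * (1 - exp (-((b - a) * t))) := by
    rw [mul_one_sub, ← exp_add]
    ring_nf
  have hnonneg : 0 ≤ 1 - exp (-((b - a) * t)) :=
    one_sub_exp_neg_nonneg (mul_nonneg (sub_nonneg.2 hab) ht.le)
  have hle : 1 - exp (-((b - a) * t)) ≤ (b - a) * t := by
    linarith [one_sub_le_exp_neg ((b - a) * t)]
  rw [hfactor, Real.norm_of_nonneg (by positivity), neg_mul]
  calc t⁻¹ * (exp (-(a * t)) * (1 - exp (-((b - a) * t))))
      ≤ t⁻¹ * (exp (-(a * t)) * ((b - a) * t)) := by gcongr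
    _ = (b - a) * exp (-(a * t)) := by field_simp

lemma integral_inv_mul_exp_sub_exp {a b : ℝ} (ha : 0 < a) (hb : 0 < b) :
    ∫ t in Ioi 0, t⁻¹ * (exp (-(a * t)) - exp (-(b * t))) = log (b / a) := by
  have hcont : Continuous fun t : ℝ ↦ exp (-t) := by fun_prop
  have hzero : Tendsto (fun t : ℝ ↦ exp (-t)) (𝓝[>] 0) (𝓝 1) := by
    simpa using (hcont.tendsto 0).mono_left nhdsWithin_le_nhds
  simpa using Frullani.integral_Ioi_eq (hcont.locallyIntegrable.locallyIntegrableOn _) ha hb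
    hzero tendsto_exp_neg_atTop_nhds_zero (integrableOn_inv_mul_exp_sub_exp ha hb)

/-- The Frullani integrand `p (e^{-(p+q)t} - e^{-2pt}) / t`, whose integral over `(0, ∞)` is the
first summand of `L p q` up to the factor `log 2`. The factor `p` makes it integrable at `p = 0`. -/
noncomputable def frullaniIntegrand (p q t : ℝ) : ℝ :=
  p * (t⁻¹ * (exp (-((p + q) * t)) - exp (-(2 * p * t))))

lemma integrableOn_frullaniIntegrand {p q : ℝ} (hp : 0 ≤ p) (hq : 0 ≤ q) :
    IntegrableOn (frullaniIntegrand p q) (Ioi 0) := by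
  unfold frullaniIntegrand
  rcases hp.eq_or_lt with rfl | hp
  · simp
  · exact (integrableOn_inv_mul_exp_sub_exp (by positivity) (by positivity)).const_mul p

lemma integral_frullaniIntegrand {p q : ℝ} (hp : 0 ≤ p) (hq : 0 ≤ q) :
    ∫ t in Ioi 0, frullaniIntegrand p q t = p * log (2 * p / (p + q)) := by
  unfold frullaniIntegrand
  rcases hp.eq_or_lt with rfl | hp
  · simp
  · rw [integral_const_mul, integral_inv_mul_exp_sub_exp (by positivity) (by positivity)]

/-- The function `t ↦ (1 - e^{-pt}) / t` on `(0, ∞)`, representing `p` in `L²(0, ∞)`. Only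
differences of these functions matter; the constant `1` makes each of them square integrable at
`0`. -/
noncomputable def expFeature (p t : ℝ) : ℝ := (1 - exp (-(p * t))) / t

lemma sq_one_sub_exp_neg_le {x : ℝ} (hx : 0 ≤ x) :
    (1 - exp (-x)) ^ 2 ≤ 2 * x ^ 2 * (1 + x ^ 2)⁻¹ := by
  have hnonneg := one_sub_exp_neg_nonneg hx
  have hle_one : (1 - exp (-x)) ^ 2 ≤ 1 :=
    pow_le_one₀ hnonneg (sub_le_self 1 (exp_nonneg _))
  have hle_sq : (1 - exp (-x)) ^ 2 ≤ x ^ 2 :=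
    pow_le_pow_left₀ hnonneg (by linarith [one_sub_le_exp_neg x]) 2
  rw [← div_eq_mul_inv, le_div_iff₀ (by positivity)]
  nlinarith [sq_nonneg x]

lemma memLp_expFeature {p : ℝ} (hp : 0 ≤ p) :
    MemLp (expFeature p) 2 (volume.restrict (Ioi 0)) := by
  have hmeas : Measurable (expFeature p) := by unfold expFeature; fun_prop
  rw [memLp_two_iff_integrable_sq hmeas.aestronglyMeasurable]
  rcases hp.eq_or_lt with rfl | hp
  · simp [expFeature]
  have hdom : IntegrableOn (fun t ↦ 2 * p ^ 2 * (1 + (p * t) ^ 2)⁻¹) (Ioi 0) :=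
    ((integrable_inv_one_add_sq.comp_mul_left' hp.ne').const_mul _).integrableOn
  refine hdom.mono' (by fun_prop) ((ae_restrict_mem measurableSet_Ioi).mono fun t ht ↦ ?_)
  have ht : 0 < t := ht
  rw [Real.norm_of_nonneg (sq_nonneg _), expFeature, div_pow, div_le_iff₀ (by positivity)]
  calc (1 - exp (-(p * t))) ^ 2
      ≤ 2 * (p * t) ^ 2 * (1 + (p * t) ^ 2)⁻¹ := sq_one_sub_exp_neg_le (by positivity)
    _ = 2 * p ^ 2 * (1 + (p * t) ^ 2)⁻¹ * t ^ 2 := by ring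

lemma hasDerivAt_sq_exp_sub_exp (p q t : ℝ) :
    HasDerivAt (fun t ↦ (exp (-(p * t)) - exp (-(q * t))) ^ 2)
      (2 * (exp (-(p * t)) - exp (-(q * t))) *
        (q * exp (-(q * t)) - p * exp (-(p * t)))) t := by
  have hexp (c : ℝ) : HasDerivAt (fun t ↦ exp (-(c * t))) (-c * exp (-(c * t))) t := by
    simpa [mul_comm] using ((hasDerivAt_id t).const_mul c).neg.exp
  convert! ((hexp p).sub (hexp q)).pow 2 using 1
  simp only [Pi.sub_apply]
  ring

lemma tendsto_sq_exp_sub_exp_mul_inv_nhdsGT_zero (p q : ℝ) :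
    Tendsto (fun t ↦ (exp (-(p * t)) - exp (-(q * t))) ^ 2 * t⁻¹) (𝓝[>] 0) (𝓝 0) := by
  simpa [mul_comm] using (hasDerivAt_sq_exp_sub_exp p q 0).tendsto_slope_zero_right

lemma tendsto_sq_exp_sub_exp_mul_inv_atTop {p q : ℝ} (hp : 0 ≤ p) (hq : 0 ≤ q) :
    Tendsto (fun t ↦ (exp (-(p * t)) - exp (-(q * t))) ^ 2 * t⁻¹) atTop (𝓝 0) := by
  refine tendsto_of_tendsto_of_tendsto_of_le_of_le' tendsto_const_nhds tendsto_inv_atTop_zero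
    ?_ ?_ <;> filter_upwards [eventually_ge_atTop 0] with t ht
  · positivity
  · refine mul_le_of_le_one_left (inv_nonneg.2 ht) ((sq_le_one_iff_abs_le_one _).2 ?_)
    have hp_le := one_sub_exp_neg_nonneg (mul_nonneg hp ht)
    have hq_le := one_sub_exp_neg_nonneg (mul_nonneg hq ht)
    rw [abs_le]
    constructor <;> linarith [exp_pos (-(p * t)), exp_pos (-(q * t))]

lemma sq_expFeature_sub (p q t : ℝ) :
    (expFeature p t - expFeature q t) ^ 2 =
      (exp (-(p * t)) - exp (-(q * t))) ^ 2 * (t ^ 2)⁻¹ := by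
  simp only [expFeature]
  ring

lemma integral_sq_expFeature_sub_eq_frullani {p q : ℝ} (hp : 0 ≤ p) (hq : 0 ≤ q) :
    ∫ t in Ioi 0, (expFeature p t - expFeature q t) ^ 2 =
      2 * ((∫ t in Ioi 0, frullaniIntegrand p q t) + ∫ t in Ioi 0, frullaniIntegrand q p t) := by
  let u (t : ℝ) := (exp (-(p * t)) - exp (-(q * t))) ^ 2
  let u' (t : ℝ) := 2 * (exp (-(p * t)) - exp (-(q * t))) *
    (q * exp (-(q * t)) - p * exp (-(p * t)))
  have hsq : (fun t ↦ (expFeature p t - expFeature q t) ^ 2) = fun t ↦ u t * (t ^ 2)⁻¹ :=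
    funext (sq_expFeature_sub p q)
  have hu' : (fun t ↦ u' t * -t⁻¹) =
      fun t ↦ -2 * (frullaniIntegrand p q t + frullaniIntegrand q p t) := by
    ext t
    simp only [u', frullaniIntegrand, two_mul, add_mul, neg_add, exp_add]
    ring
  have husq : IntegrableOn (fun t ↦ u t * (t ^ 2)⁻¹) (Ioi 0) := by
    rw [← hsq]
    exact ((memLp_expFeature hp).sub (memLp_expFeature hq)).integrable_sq
  have hpq := integrableOn_frullaniIntegrand hp hq
  have hqp := integrableOn_frullaniIntegrand hq hp
  have hu'inv : IntegrableOn (fun t ↦ u' t * -t⁻¹) (Ioi 0) := by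
    rw [hu']
    exact (hpq.add hqp).const_mul (-2)
  have hparts : ∫ t in Ioi 0, u t * (t ^ 2)⁻¹ = 0 - 0 - ∫ t in Ioi 0, u' t * -t⁻¹ := by
    refine integral_Ioi_mul_deriv_eq_deriv_mul (fun t _ ↦ hasDerivAt_sq_exp_sub_exp p q t)
      (fun t ht ↦ ?_) husq hu'inv ?_ ?_
    · simpa using (hasDerivAt_inv (𝕜 := ℝ) (ne_of_gt ht)).fun_neg
    · simpa [Pi.mul_def] using (tendsto_sq_exp_sub_exp_mul_inv_nhdsGT_zero p q).neg
    · simpa [Pi.mul_def] using (tendsto_sq_exp_sub_exp_mul_inv_atTop hp hq).neg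
  rw [hsq, hparts, hu', integral_const_mul, integral_add hpq hqp]
  ring

lemma integral_sq_expFeature_sub {p q : ℝ} (hp : 0 ≤ p) (hq : 0 ≤ q) :
    ∫ t in Ioi 0, (expFeature p t - expFeature q t) ^ 2 = 2 * log 2 * L p q := by
  rw [integral_sq_expFeature_sub_eq_frullani hp hq, integral_frullaniIntegrand hp hq,
    integral_frullaniIntegrand hq hp, L, logb, logb, add_comm q p]
  field_simp

/-- The map `p ↦ expFeature p` into `L²(0, ∞)`, which turns the Jensen–Shannon term `L` into a
squared Hilbert-space distance up to the factor `2 log 2`. -/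
noncomputable def jsEmbedding (p : ℝ≥0) : Lp ℝ 2 (volume.restrict (Ioi (0 : ℝ))) :=
  (memLp_expFeature p.coe_nonneg).toLp _

lemma dist_jsEmbedding_sq (p q : ℝ≥0) :
    dist (jsEmbedding p) (jsEmbedding q) ^ 2 = 2 * log 2 * L p q := by
  have hp := memLp_expFeature p.coe_nonneg
  have hq := memLp_expFeature q.coe_nonneg
  rw [← integral_sq_expFeature_sub p.coe_nonneg q.coe_nonneg, dist_eq_norm,
    ← real_inner_self_eq_norm_sq, jsEmbedding, jsEmbedding, ← MemLp.toLp_sub hp hq, L2.inner_def]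
  refine integral_congr_ae ((hp.sub hq).coeFn_toLp.mono fun t ht ↦ ?_)
  simp [ht, sq]

theorem JS_triangle_general {ι : Type*} [Fintype ι] {p q r : ι → ℝ}
    (hp : 0 ≤ p) (hq : 0 ≤ q) (hr : 0 ≤ r) :
    √(∑ i, L (p i) (r i)) ≤ √(∑ i, L (p i) (q i)) + √(∑ i, L (q i) (r i)) := by
  lift p to ι → ℝ≥0 using hp
  lift q to ι → ℝ≥0 using hq
  lift r to ι → ℝ≥0 using hr
  let embed (x : ι → ℝ≥0) := WithLp.toLp 2 fun i ↦ jsEmbedding (x i)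
  have hdist (x y : ι → ℝ≥0) :
      dist (embed x) (embed y) = √(2 * log 2) * √(∑ i, L (x i) (y i)) := by
    have hconst : 0 ≤ 2 * log 2 := by positivity
    simp only [embed, PiLp.dist_eq_of_L2, dist_jsEmbedding_sq, ← Finset.mul_sum, sqrt_mul hconst]
  have htri := dist_triangle (embed p) (embed q) (embed r)
  simp only [hdist, ← mul_add] at htri
  exact le_of_mul_le_mul_left htri (by positivity)

/-- The vector `(1 - μ, ν)` of nonnegative weights that the divergence compares. -/
def IFV.weights (a : IFV) : Fin 2 → ℝ := ![1 - a.mu, a.nu]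

lemma IFV.weights_nonneg (a : IFV) : 0 ≤ a.weights :=
  Fin.forall_fin_two.2 ⟨sub_nonneg.2 (by linarith [a.nu_nonneg, a.sum_le]), a.nu_nonneg⟩

lemma JS_eq_sqrt_sum_L_div (a b : IFV) :
    JS a b = √(∑ i, L (a.weights i) (b.weights i)) / √2 := by
  simp only [JS, Z, IFV.weights, Fin.sum_univ_two, Matrix.cons_val_zero, Matrix.cons_val_one,
    sqrt_div' _ zero_le_two]

theorem JS_triangle (a b c : IFV) : JS a c ≤ JS a b + JS b c := by
  simpa only [JS_eq_sqrt_sum_L_div, ← add_div] using div_le_div_of_nonneg_right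
    (JS_triangle_general a.weights_nonneg b.weights_nonneg c.weights_nonneg) (sqrt_nonneg 2)
end

section
/- Define the entropy E(α) = 1 − JS(α, α^∁) for an intuitionistic fuzzy value α, where α^∁ = ⟨ν_α, μ_α⟩. Then E(α) = 1 if and only if μ_α = ν_α. -/
/-- The complement `α^∁ = ⟨ν_α, μ_α⟩`. -/
def IFV.compl (a : IFV) : IFV :=
  ⟨a.nu, a.mu, a.nu_nonneg, a.mu_nonneg, by linarith [a.sum_le]⟩

/-- The entropy `E(α) = 1 − JS(α, α^∁)`. -/
noncomputable def E (a : IFV) : ℝ := 1 - JS a a.compl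

/-!
Divided by their mean, two weights `p`, `q` become `2p/(p+q)` and `2q/(p+q)`, which sum to `2`.
So the linear terms of `klFun x = x log x + 1 - x` cancel, and `L p q` is a nonnegative multiple of
`klFun (2p/(p+q)) + klFun (2q/(p+q))`. As `klFun` is nonnegative on `[0, ∞)` and vanishes only at
`1`, `L p q = 0` exactly when `p = q`, so `JS` separates points and `E α = 1` means `α = α^∁`.
-/

open InformationTheory (klFun klFun_nonneg klFun_eq_zero_iff)

theorem L_eq_mul_klFun_add_klFun (p q : ℝ) :
    L p q = (p + q) / (2 * Real.log 2) *
      (klFun (2 * p / (p + q)) + klFun (2 * q / (p + q))) := by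
  rcases eq_or_ne (p + q) 0 with hsum | hsum
  · simp [L, hsum]
  · have hlog : Real.log 2 ≠ 0 := (Real.log_pos one_lt_two).ne'
    simp only [L, Real.logb, klFun]
    field_simp
    ring

section Nonneg

variable {p q : ℝ}

theorem L_nonneg (hp : 0 ≤ p) (hq : 0 ≤ q) : 0 ≤ L p q := by
  rw [L_eq_mul_klFun_add_klFun]
  have hklp : 0 ≤ klFun (2 * p / (p + q)) := klFun_nonneg (by positivity)
  have hklq : 0 ≤ klFun (2 * q / (p + q)) := klFun_nonneg (by positivity)
  positivity

theorem L_eq_zero_iff (hp : 0 ≤ p) (hq : 0 ≤ q) : L p q = 0 ↔ p = q := by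
  rcases (add_nonneg hp hq).eq_or_lt' with hsum | hsum
  · obtain ⟨rfl, rfl⟩ := (add_eq_zero_iff_of_nonneg hp hq).1 hsum
    simp [L]
  · have hx : 0 ≤ 2 * p / (p + q) := by positivity
    have hy : 0 ≤ 2 * q / (p + q) := by positivity
    have hcoeff : (p + q) / (2 * Real.log 2) ≠ 0 := by positivity
    rw [L_eq_mul_klFun_add_klFun, mul_eq_zero_iff_left hcoeff,
      add_eq_zero_iff_of_nonneg (klFun_nonneg hx) (klFun_nonneg hy),
      klFun_eq_zero_iff hx, klFun_eq_zero_iff hy, div_eq_one_iff_eq hsum.ne',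
      div_eq_one_iff_eq hsum.ne']
    constructor
    · rintro ⟨hp_mean, -⟩
      linarith
    · rintro rfl
      exact ⟨two_mul p, two_mul p⟩

end Nonneg

theorem IFV.one_sub_mu_nonneg (a : IFV) : 0 ≤ 1 - a.mu := by
  linarith [a.nu_nonneg, a.sum_le]

theorem IFV.eq_compl_iff (a : IFV) : a = a.compl ↔ a.mu = a.nu := by
  simp [IFV.ext_iff, IFV.compl, eq_comm]

section Divergence

variable (a b : IFV)

theorem Z_nonneg : 0 ≤ Z a b :=
  add_nonneg (L_nonneg a.one_sub_mu_nonneg b.one_sub_mu_nonneg)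
    (L_nonneg a.nu_nonneg b.nu_nonneg)

theorem Z_eq_zero_iff : Z a b = 0 ↔ a = b := by
  rw [Z, add_eq_zero_iff_of_nonneg (L_nonneg a.one_sub_mu_nonneg b.one_sub_mu_nonneg)
      (L_nonneg a.nu_nonneg b.nu_nonneg),
    L_eq_zero_iff a.one_sub_mu_nonneg b.one_sub_mu_nonneg,
    L_eq_zero_iff a.nu_nonneg b.nu_nonneg, sub_right_inj, ← IFV.ext_iff]

theorem JS_eq_zero_iff : JS a b = 0 ↔ a = b := by
  rw [JS, Real.sqrt_eq_zero (div_nonneg (Z_nonneg a b) zero_le_two),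
    div_eq_zero_iff, or_iff_left two_ne_zero, Z_eq_zero_iff]

end Divergence

theorem entropy_eq_one_iff (a : IFV) : E a = 1 ↔ a.mu = a.nu := by
  rw [E, sub_eq_self, JS_eq_zero_iff, a.eq_compl_iff]
end

section
/- For every λ ∈ [0,1]: JS(⟨1,0⟩, ⟨λ,0⟩) = √((1−λ)/2) and JS(⟨1,0⟩, ⟨λ,1−λ⟩) = √(1−λ). In particular, for λ < 1 one has JS(⟨1,0⟩, ⟨λ,0⟩) < JS(⟨1,0⟩, ⟨λ,1−λ⟩), so the Jensen–Shannon IF divergence strictly distinguishes ⟨λ,0⟩ from ⟨λ,1−λ⟩ relative to ⟨1,0⟩. -/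
/-!
The numbers `1 - 1` and `0` that `⟨1, 0⟩` contributes to `Z` both vanish, and `L 0 q = q` because
the only surviving logarithm is `log₂ 2`. Hence the divergence of `⟨μ, ν⟩` from `⟨1, 0⟩` is
`√((1 - μ + ν) / 2)`, a strictly increasing function of `ν - μ`.
-/

theorem L_zero_left (q : ℝ) : L 0 q = q := by
  rcases eq_or_ne q 0 with rfl | hq
  · simp [L]
  · rw [L, zero_mul, zero_add, zero_add, mul_div_cancel_right₀ 2 hq,
      Real.logb_self_eq_one one_lt_two, mul_one]

theorem Z_posOne_left (a : IFV) : Z IFV.posOne a = 1 - a.mu + a.nu := by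
  simp only [Z, IFV.posOne, sub_self, L_zero_left]

theorem JS_posOne_left (a : IFV) : JS IFV.posOne a = √((1 - a.mu + a.nu) / 2) := by
  rw [JS, Z_posOne_left]

theorem JS_posOne_lt_JS_posOne_iff {a b : IFV} :
    JS IFV.posOne a < JS IFV.posOne b ↔ a.nu - a.mu < b.nu - b.mu := by
  have radicand_nonneg : 0 ≤ (1 - a.mu + a.nu) / 2 := by
    linarith [a.nu_nonneg, a.sum_le]
  rw [JS_posOne_left, JS_posOne_left, Real.sqrt_lt_sqrt_iff radicand_nonneg]
  constructor <;> intro h <;> linarith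

theorem JS_distinguishes (l : ℝ) (hl0 : 0 ≤ l) (hl1 : l ≤ 1) :
    JS IFV.posOne ⟨l, 0, hl0, le_rfl, by linarith⟩ = Real.sqrt ((1 - l) / 2) ∧
    JS IFV.posOne ⟨l, 1 - l, hl0, by linarith, by linarith⟩ = Real.sqrt (1 - l) ∧
    (l < 1 →
      JS IFV.posOne ⟨l, 0, hl0, le_rfl, by linarith⟩ <
        JS IFV.posOne ⟨l, 1 - l, hl0, by linarith, by linarith⟩) := by
  refine ⟨?_, ?_, fun hl => ?_⟩
  · rw [JS_posOne_left, add_zero]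
  · rw [JS_posOne_left, add_self_div_two]
  · rw [JS_posOne_lt_JS_posOne_iff]
    linarith
end
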